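/- For every τ in the Siegel upper half-space H₂, there exists an even half-integer characteristic m = (a,b) (with a, b ∈ {0,1/2}² and 4·aᵀb even) such that Θ_m(τ) ≠ 0. Equivalently, the ten even theta constants have no common zero on H₂, so that τ ↦ (Θ_m(τ)⁴)_{m even} defines a map from H₂ to the projective space ℙ⁹(ℂ). -/

import Mathlib

open scoped BigOperators
open Complex Matrix

noncomputable section

/-- `τ` belongs to the Siegel upper half-space of degree 2: it is a symmetric
`2 × 2` complex matrix whose imaginary part is positive definite. -/
def IsSiegel (τ : Matrix (Fin 2) (Fin 2) ℂ) : Prop :=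
  τ.IsSymm ∧ (Matrix.of fun i j => (τ i j).im).PosDef

/-- The term of index `n ∈ ℤ²` of the theta series with characteristic `(a, b)`. -/
def thetaTerm (a b : Fin 2 → ℝ) (τ : Matrix (Fin 2) (Fin 2) ℂ) (n : Fin 2 → ℤ) : ℂ :=
  Complex.exp (2 * Real.pi * Complex.I *
      (∑ i, ∑ j, ((n i : ℂ) + (a i : ℂ)) * τ i j * ((n j : ℂ) + (a j : ℂ)))
    + 2 * Real.pi * Complex.I * (∑ i, (n i : ℂ) * (b i : ℂ)))

/-- The theta constant `Θ_{(a,b)}(τ)`. -/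
def Theta (a b : Fin 2 → ℝ) (τ : Matrix (Fin 2) (Fin 2) ℂ) : ℂ :=
  ∑' n : Fin 2 → ℤ, thetaTerm a b τ n

/-- `(a, b)` is a half-integer characteristic when all entries lie in `{0, 1/2}`. -/
def IsHalf (a : Fin 2 → ℝ) : Prop := ∀ i, a i = 0 ∨ a i = 1 / 2

/-- The quadratic form of `τ`. -/
def qForm (τ : Matrix (Fin 2) (Fin 2) ℂ) (n : Fin 2 → ℤ) : ℂ :=
  ∑ i, ∑ j, (n i : ℂ) * τ i j * (n j : ℂ)

/-- The half-weight exponential. -/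
def rTerm (τ : Matrix (Fin 2) (Fin 2) ℂ) (n : Fin 2 → ℤ) : ℂ :=
  Complex.exp (Real.pi * Complex.I * qForm τ n)

lemma rTerm_mul (τ : Matrix (Fin 2) (Fin 2) ℂ) (n m : Fin 2 → ℤ) :
    rTerm τ n ^ 2 * rTerm τ m ^ 2 = rTerm τ (n + m) * rTerm τ (n - m) := by
  unfold rTerm
  rw [← Complex.exp_nat_mul, ← Complex.exp_nat_mul, ← Complex.exp_add, ← Complex.exp_add]
  congr 1
  simp only [qForm, Fin.sum_univ_two, Pi.add_apply, Pi.sub_apply]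
  push_cast
  ring

lemma posdef_bound (Y : Matrix (Fin 2) (Fin 2) ℝ) (hY : Y.PosDef) :
    ∃ c : ℝ, 0 < c ∧ ∀ x y : ℝ,
      c * (x ^ 2 + y ^ 2) ≤ x * Y 0 0 * x + x * Y 0 1 * y + (y * Y 1 0 * x + y * Y 1 1 * y) := by
  have h0 : 0 < Y 0 0 := hY.diag_pos
  have h1 : 0 < Y 1 1 := hY.diag_pos
  have hd := hY.det_pos
  rw [Matrix.det_fin_two] at hd
  have hs : Y 1 0 = Y 0 1 := by
    have := hY.1.apply 0 1
    simpa using this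
  rw [hs] at hd ⊢
  refine ⟨(Y 0 0 * Y 1 1 - Y 0 1 * Y 0 1) / (Y 0 0 + Y 1 1), by positivity, fun x y => ?_⟩
  rw [div_mul_eq_mul_div, div_le_iff₀ (by positivity)]
  nlinarith [sq_nonneg (Y 0 0 * x + Y 0 1 * y), sq_nonneg (Y 0 1 * x + Y 1 1 * y)]

lemma summable_gauss {c : ℝ} (hc : 0 < c) :
    Summable fun n : ℤ => Real.exp (-Real.pi * (c * (n : ℝ) ^ 2)) := by
  simpa using summable_pow_mul_jacobiTheta₂_term_bound 0 hc 0

lemma summable_rTerm (τ : Matrix (Fin 2) (Fin 2) ℂ) (hτ : IsSiegel τ) :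
    Summable fun n => ‖rTerm τ n‖ := by
  obtain ⟨c, hc, hb⟩ := posdef_bound _ hτ.2
  have h1 := summable_gauss hc
  have h2 := h1.mul_of_nonneg h1 (fun _ => (Real.exp_pos _).le) (fun _ => (Real.exp_pos _).le)
  have h3 := (finTwoArrowEquiv ℤ).summable_iff.mpr h2
  refine Summable.of_nonneg_of_le (fun _ => norm_nonneg _) (fun n => ?_) h3
  simp only [Function.comp, finTwoArrowEquiv_apply, rTerm, Complex.norm_exp]
  rw [← Real.exp_add, Real.exp_le_exp]
  have hre : (Real.pi * Complex.I * qForm τ n).re = -Real.pi * (qForm τ n).im := by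
    simp [Complex.mul_re]
  have him : (qForm τ n).im = n 0 * (τ 0 0).im * n 0 + n 0 * (τ 0 1).im * n 1 +
      (n 1 * (τ 1 0).im * n 0 + n 1 * (τ 1 1).im * n 1) := by
    simp [qForm, Fin.sum_univ_two, Complex.mul_im, Complex.add_im]
  have := hb (n 0) (n 1)
  simp only [Matrix.of_apply] at this
  rw [hre, him]
  change _ ≤ -Real.pi * (c * (n 0 : ℝ) ^ 2) + -Real.pi * (c * (n 1 : ℝ) ^ 2)
  nlinarith [Real.pi_pos]

/-- The coset sums. -/
def cosetSum (τ : Matrix (Fin 2) (Fin 2) ℂ) (s : Fin 2 → ℤ) : ℂ :=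
  ∑' m : Fin 2 → ℤ, rTerm τ (s - 2 • m)

lemma cosetSum_sub (τ : Matrix (Fin 2) (Fin 2) ℂ) (s k : Fin 2 → ℤ) :
    cosetSum τ (s - 2 • k) = cosetSum τ s := by
  unfold cosetSum
  rw [← (Equiv.addLeft k).tsum_eq (fun m => rTerm τ (s - 2 • m))]
  refine tsum_congr fun m => ?_
  congr 1
  simp only [Equiv.coe_addLeft]
  abel

lemma summable_sq (τ : Matrix (Fin 2) (Fin 2) ℂ) (hτ : IsSiegel τ) :
    Summable fun n => ‖rTerm τ n ^ 2‖ := by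
  have h := summable_rTerm τ hτ
  have h2 := (h.mul_of_nonneg h (fun _ => norm_nonneg _) (fun _ => norm_nonneg _)).comp_injective
    (i := fun n : Fin 2 → ℤ => (n, n)) (fun a b hab => by simpa using hab)
  refine h2.congr fun n => ?_
  simp [sq]

/-- The reindexing `(s, m) ↦ (s - m, m)`. -/
def shear : (Fin 2 → ℤ) × (Fin 2 → ℤ) ≃ (Fin 2 → ℤ) × (Fin 2 → ℤ) where
  toFun p := (p.1 - p.2, p.2)
  invFun p := (p.1 + p.2, p.2)
  left_inv p := by simp
  right_inv p := by simp

lemma sq_formula (τ : Matrix (Fin 2) (Fin 2) ℂ) (hτ : IsSiegel τ) (χ : (Fin 2 → ℤ) → ℂ)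
    (hadd : ∀ n m, χ (n + m) = χ n * χ m) (hn : ∀ n, ‖χ n‖ = 1) :
    HasSum (fun s => rTerm τ s * cosetSum τ s * χ s) ((∑' n, rTerm τ n ^ 2 * χ n) ^ 2) := by
  have hs : Summable fun n => ‖rTerm τ n ^ 2 * χ n‖ := by
    simpa only [norm_mul, hn, mul_one] using summable_sq τ hτ
  have h1 := summable_mul_of_summable_norm hs hs
  have h2 := tsum_mul_tsum_of_summable_norm hs hs
  have h3 := h1.hasSum
  rw [← h2, ← sq, ← shear.hasSum_iff] at h3
  have h4 : ∀ s m : Fin 2 → ℤ, ((fun p : (Fin 2 → ℤ) × (Fin 2 → ℤ) =>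
      rTerm τ p.1 ^ 2 * χ p.1 * (rTerm τ p.2 ^ 2 * χ p.2)) ∘ shear) (s, m)
      = rTerm τ s * χ s * rTerm τ (s - 2 • m) := by
    intro s m
    have e1 := rTerm_mul τ (s - m) m
    have e2 := hadd (s - m) m
    rw [sub_add_cancel] at e1 e2
    have e3 : s - m - m = s - 2 • m := by rw [two_smul]; abel
    rw [e3] at e1
    simp only [Function.comp, shear, Equiv.coe_fn_mk]
    rw [e2]
    linear_combination (χ (s - m) * χ m) * e1
  have h5 := h3.summable.prod_factor
  have h6 := h3.prod_fiberwise (fun s => (h5 s).hasSum)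
  have h7 : (fun s => rTerm τ s * cosetSum τ s * χ s) = fun s => ∑' m, ((fun p :
      (Fin 2 → ℤ) × (Fin 2 → ℤ) =>
      rTerm τ p.1 ^ 2 * χ p.1 * (rTerm τ p.2 ^ 2 * χ p.2)) ∘ shear) (s, m) := by
    funext s
    simp_rw [h4]
    rw [tsum_mul_left, cosetSum]
    ring
  rw [h7]
  exact h6

lemma coset_filter (g : (Fin 2 → ℤ) → ℂ) (c : Fin 2 → ℤ) :
    ∑' s, g s * ((1 + (-1 : ℂ) ^ (s 0 + c 0)) * (1 + (-1 : ℂ) ^ (s 1 + c 1)))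
      = 4 * ∑' m : Fin 2 → ℤ, g (c - 2 • m) := by
  have hinj : Function.Injective fun m : Fin 2 → ℤ => c - 2 • m := by
    intro a b hab
    funext i
    have := congrFun hab i
    simp at this
    exact this
  rw [← tsum_mul_left, ← hinj.tsum_eq]
  · refine tsum_congr fun m => ?_
    have h : ∀ i, (-1 : ℂ) ^ ((c - 2 • m) i + c i) = 1 := by
      intro i
      apply Even.neg_one_zpow
      exact ⟨c i - m i, by simp; ring⟩
    rw [h, h]
    ring
  · intro s hs
    rw [Function.mem_support] at hs
    have key : ∀ i, (1 + (-1 : ℂ) ^ (s i + c i)) ≠ 0 → ∃ m : ℤ, c i - 2 * m = s i := by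
      intro i hi
      rcases Int.even_or_odd (s i + c i) with he | ho
      · obtain ⟨k, hk⟩ := he
        exact ⟨c i - k, by omega⟩
      · rw [ho.neg_one_zpow] at hi
        simp at hi
    obtain ⟨m0, h0⟩ := key 0 (fun h => hs (by rw [h]; ring))
    obtain ⟨m1, h1⟩ := key 1 (fun h => hs (by rw [h]; ring))
    refine ⟨![m0, m1], ?_⟩
    funext i
    fin_cases i
    · simpa using h0
    · simpa using h1

/-- The sign characters. -/
def signChar (p q : ℤ) (n : Fin 2 → ℤ) : ℂ := (-1 : ℂ) ^ (p * n 0) * (-1 : ℂ) ^ (q * n 1)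

lemma cosetSum_zero (τ : Matrix (Fin 2) (Fin 2) ℂ) (hτ : IsSiegel τ)
    (h : ∀ p q : ℤ, (p = 0 ∨ p = 1) → (q = 0 ∨ q = 1) →
      ∑' n, rTerm τ n ^ 2 * signChar p q n = 0) (c : Fin 2 → ℤ) : cosetSum τ c = 0 := by
  have hne : (-1 : ℂ) ≠ 0 := by norm_num
  have H : ∀ p q : ℤ, (p = 0 ∨ p = 1) → (q = 0 ∨ q = 1) →
      HasSum (fun s => rTerm τ s * cosetSum τ s * signChar p q s * signChar p q c) 0 := by
    intro p q hp hq
    have := (sq_formula τ hτ (signChar p q) (fun n m => by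
      simp only [signChar, Pi.add_apply, mul_add, zpow_add₀ hne]; ring) (fun n => by
      simp [signChar])).mul_right (signChar p q c)
    rw [h p q hp hq] at this
    simpa using this
  have H4 := (((H 0 0 (by simp) (by simp)).add (H 1 0 (by simp) (by simp))).add
    ((H 0 1 (by simp) (by simp)).add (H 1 1 (by simp) (by simp)))).tsum_eq
  have h1 := coset_filter (fun s => rTerm τ s * cosetSum τ s) c
  have h2 : ∑' m : Fin 2 → ℤ, rTerm τ (c - 2 • m) * cosetSum τ (c - 2 • m) = cosetSum τ c ^ 2 := by
    simp_rw [cosetSum_sub]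
    rw [tsum_mul_right, sq]
    rfl
  have h3 : 4 * cosetSum τ c ^ 2 = 0 := by
    rw [← h2, ← h1]
    trans (0 + 0 + (0 + 0) : ℂ)
    · rw [← H4]
      refine tsum_congr fun s => ?_
      simp only [signChar, zpow_add₀ hne, zero_mul, one_mul, zpow_zero]
      ring
    · simp
  simpa using h3

/-- The normalised measure used by Mathlib on the unit torus. -/
local instance circleMeasureSpace : MeasureTheory.MeasureSpace UnitAddCircle :=
  ⟨AddCircle.haarAddCircle⟩

local instance circleProb :
    MeasureTheory.IsProbabilityMeasure (MeasureTheory.volume : MeasureTheory.Measure UnitAddCircle) :=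
  inferInstanceAs (MeasureTheory.IsProbabilityMeasure AddCircle.haarAddCircle)

open UnitAddTorus in
lemma all_zero_false (τ : Matrix (Fin 2) (Fin 2) ℂ) (hτ : IsSiegel τ)
    (h : ∀ x : UnitAddTorus (Fin 2), ∑' n, rTerm τ n ^ 2 * mFourier n x = 0) : False := by
  have hs : Summable fun n => rTerm τ n ^ 2 • mFourier (d := Fin 2) n := by
    apply Summable.of_norm
    simpa only [norm_smul, mFourier_norm, mul_one] using summable_sq τ hτ
  have h0 : HasSum (fun n => rTerm τ n ^ 2 • mFourier (d := Fin 2) n) 0 := by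
    have e : ∑' n, rTerm τ n ^ 2 • mFourier (d := Fin 2) n = 0 := by
      ext x
      rw [← ContinuousMap.tsum_apply hs x]
      simpa using h x
    rw [← e]
    exact hs.hasSum
  have h2 := ((innerSL ℂ (mFourierLp (d := Fin 2) 2 0)).comp
    (ContinuousMap.toLp (E := ℂ) 2 MeasureTheory.volume ℂ)).hasSum h0
  have ho := orthonormal_iff_ite.mp (orthonormal_mFourier (d := Fin 2))
  simp only [map_smul, ContinuousLinearMap.comp_apply, innerSL_apply_apply, map_zero] at h2
  have h3 := h2.unique (hasSum_single 0 (fun n hn => by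
    rw [ho 0 n, if_neg hn.symm]; simp))
  rw [ho 0 0] at h3
  simp [rTerm, qForm] at h3

lemma Theta_sign (τ : Matrix (Fin 2) (Fin 2) ℂ) (p q : ℤ) :
    Theta 0 ![(p : ℝ) / 2, (q : ℝ) / 2] τ = ∑' n, rTerm τ n ^ 2 * signChar p q n := by
  unfold Theta
  refine tsum_congr fun n => ?_
  have e : ∀ k : ℤ, (-1 : ℂ) ^ k = Complex.exp (k * (Real.pi * Complex.I)) := by
    intro k
    rw [Complex.exp_int_mul, Complex.exp_pi_mul_I]
  unfold thetaTerm rTerm signChar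
  rw [e, e, ← Complex.exp_nat_mul, ← Complex.exp_add, ← Complex.exp_add]
  congr 1
  simp only [qForm, Fin.sum_univ_two]
  simp
  ring

/-- At every point of `H₂` at least one even half-integer theta constant is
nonzero: the ten even theta constants have no common zero. -/
theorem theta_no_common_zero (τ : Matrix (Fin 2) (Fin 2) ℂ) (hτ : IsSiegel τ) :
    ∃ a b : Fin 2 → ℝ, IsHalf a ∧ IsHalf b ∧
      (∃ k : ℤ, 4 * ∑ i, a i * b i = 2 * (k : ℝ)) ∧ Theta a b τ ≠ 0 := by
  by_contra hcon
  have hz : ∀ p q : ℤ, (p = 0 ∨ p = 1) → (q = 0 ∨ q = 1) →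
      ∑' n, rTerm τ n ^ 2 * signChar p q n = 0 := by
    intro p q hp hq
    by_contra hne
    rw [← Theta_sign] at hne
    refine hcon ⟨0, _, fun i => Or.inl rfl, fun i => ?_, ⟨0, by simp⟩, hne⟩
    fin_cases i
    · rcases hp with rfl | rfl <;> simp
    · rcases hq with rfl | rfl <;> simp
  refine all_zero_false τ hτ fun x => ?_
  have := sq_formula τ hτ (fun n => UnitAddTorus.mFourier n x)
    (fun n m => UnitAddTorus.mFourier_add) (fun n => by
      simp only [UnitAddTorus.mFourier, ContinuousMap.coe_mk, fourier_apply, norm_prod,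
        Circle.norm_coe, Finset.prod_const_one])
  simp only [cosetSum_zero τ hτ hz, mul_zero, zero_mul] at this
  exact pow_eq_zero_iff (two_ne_zero) |>.mp (this.unique hasSum_zero)
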